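/- Under the hypotheses of the location-family proposition (g differentiable, strictly convex with minimum at 0, g' surjective onto ℝ), the effective loss L_λ(r) := min_γ { g(r - γ) + λ|γ| } is convex, agrees with g(r) for r ∈ [(g')⁻¹(-λ), (g')⁻¹(λ)], and is affine (linear with slope λ or -λ) outside this interval, with a continuous derivative everywhere. -/

import Mathlib

/-- The effective loss `L_λ(r) = inf_γ g(r - γ) + λ|γ|` is convex, agrees with `g` on
`[(g')⁻¹(-λ), (g')⁻¹(λ)]`, is affine with slope `λ` (resp. `-λ`) beyond that interval,
and has a continuous derivative everywhere. -/
theorem location_family_effective_loss (g : ℝ → ℝ) (lam : ℝ) (hlam : 0 < lam)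
    (hg : Differentiable ℝ g)
    (hconv : StrictConvexOn ℝ Set.univ g)
    (hmin : ∀ x : ℝ, g 0 ≤ g x)
    (hsurj : Function.Surjective (deriv g))
    (a b : ℝ) (ha : deriv g a = lam) (hb : deriv g b = -lam) :
    let L : ℝ → ℝ := fun r => sInf {v : ℝ | ∃ γ : ℝ, v = g (r - γ) + lam * |γ|}
    ConvexOn ℝ Set.univ L ∧
    (∀ r ∈ Set.Icc b a, L r = g r) ∧
    (∀ r : ℝ, a < r → L r = g a + lam * (r - a)) ∧
    (∀ r : ℝ, r < b → L r = g b - lam * (r - b)) ∧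
    Differentiable ℝ L ∧ Continuous (deriv L) := by
  intro L
  have tang : ∀ x y : ℝ, g x + deriv g x * (y - x) ≤ g y := by
    intro x y
    have hd := (hg x).hasDerivAt
    rcases lt_trichotomy x y with h | h | h
    · have h1 := hconv.convexOn.le_slope_of_hasDerivAt (Set.mem_univ x) (Set.mem_univ y) h hd
      rw [slope_def_field, le_div_iff₀ (by linarith)] at h1
      linarith
    · subst h; simp
    · have h1 := hconv.convexOn.slope_le_of_hasDerivAt (Set.mem_univ y) (Set.mem_univ x) h hd
      rw [slope_def_field, div_le_iff₀ (by linarith)] at h1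
      linarith
  have hmono : Monotone (deriv g) := by
    intro x y h
    rcases h.eq_or_lt with h | h
    · rw [h]
    · have h1 := tang x y
      have h2 := tang y x
      by_contra hc
      push Not at hc
      nlinarith
  have hcont : Continuous (deriv g) := hmono.continuous_of_surjective hsurj
  have hba : b < a := by
    by_contra hc
    push Not at hc
    have := hmono hc
    linarith
  obtain ⟨c, hc⟩ : ∃ c : ℝ → ℝ, c = fun r => max b (min a r) := ⟨_, rfl⟩
  have hcc : Continuous c := by rw [hc]; fun_prop
  have hcb : ∀ r, b ≤ c r := by intro r; rw [hc]; exact le_max_left _ _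
  have hca : ∀ r, c r ≤ a := by intro r; rw [hc]; exact max_le hba.le (min_le_left _ _)
  have c1 : ∀ r, r ∈ Set.Icc b a → c r = r := by
    intro r hr; rw [hc]; simp [hr.1, hr.2]
  have c2 : ∀ r, a < r → c r = a := by
    intro r hr; rw [hc]; simp [hr.le, hba.le]
  have c3 : ∀ r, r < b → c r = b := by
    intro r hr; rw [hc]; simp [hr.le]
  have hD1 : ∀ r, deriv g (c r) ≤ lam := fun r => ha ▸ hmono (hca r)
  have hD2 : ∀ r, -lam ≤ deriv g (c r) := fun r => hb ▸ hmono (hcb r)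
  have key : ∀ x y γ : ℝ,
      g (c x) + deriv g (c x) * (y - c x) ≤ g (y - γ) + lam * |γ| := by
    intro x y γ
    have h1 := tang (c x) (y - γ)
    have h2 : deriv g (c x) * γ ≤ lam * |γ| := by
      calc deriv g (c x) * γ ≤ |deriv g (c x) * γ| := le_abs_self _
        _ = |deriv g (c x)| * |γ| := abs_mul _ _
        _ ≤ lam * |γ| := by
          gcongr
          exact abs_le.2 ⟨hD2 x, hD1 x⟩
    linarith
  have habs : ∀ x, lam * |x - c x| = deriv g (c x) * (x - c x) := by
    intro x
    by_cases h1 : a < x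
    · rw [c2 x h1, ha, abs_of_pos (by linarith)]
    · by_cases h2 : x < b
      · rw [c3 x h2, hb, abs_of_neg (by linarith)]; ring
      · rw [c1 x ⟨not_lt.1 h2, not_lt.1 h1⟩]; simp
  have low : ∀ x y : ℝ, g (c x) + deriv g (c x) * (y - c x) ≤ L y := by
    intro x y
    apply le_csInf
    · exact ⟨_, 0, rfl⟩
    · rintro v ⟨γ, rfl⟩
      exact key x y γ
  have hL : ∀ x, L x = g (c x) + deriv g (c x) * (x - c x) := by
    intro x
    apply le_antisymm _ (low x x)
    apply csInf_le
    · refine ⟨g (c x) + deriv g (c x) * (x - c x), ?_⟩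
      rintro v ⟨γ, rfl⟩
      exact key x x γ
    · refine ⟨x - c x, ?_⟩
      rw [habs, sub_sub_cancel]
  have sub : ∀ x y : ℝ, L x + deriv g (c x) * (y - x) ≤ L y := by
    intro x y
    have := low x y
    rw [hL x]
    linarith
  have hDc : Continuous fun x => deriv g (c x) := hcont.comp hcc
  have hder : ∀ x, HasDerivAt L (deriv g (c x)) x := by
    intro x
    rw [hasDerivAt_iff_isLittleO, Asymptotics.isLittleO_iff]
    intro ε hε
    have hev : ∀ᶠ y in nhds x, |deriv g (c y) - deriv g (c x)| < ε := by
      have := Metric.continuousAt_iff'.1 (hDc.continuousAt (x := x)) ε hε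
      simpa [Real.dist_eq] using this
    filter_upwards [hev] with y hy
    have h1 := sub x y
    have h2 := sub y x
    have h3 : |L y - L x - (y - x) * deriv g (c x)|
        ≤ |(deriv g (c y) - deriv g (c x)) * (y - x)| := by
      rw [abs_of_nonneg (by linarith)]
      refine le_trans ?_ (le_abs_self _)
      linarith
    rw [abs_mul] at h3
    simp only [Real.norm_eq_abs, smul_eq_mul]
    exact h3.trans (mul_le_mul_of_nonneg_right hy.le (abs_nonneg _))
  have hderiv : deriv L = fun x => deriv g (c x) := funext fun x => (hder x).deriv
  refine ⟨⟨convex_univ, ?_⟩, ?_, ?_, ?_, fun x => (hder x).differentiableAt, ?_⟩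
  · intro x _ y _ s t hs ht hst
    simp only [smul_eq_mul]
    have h1 := mul_le_mul_of_nonneg_left (sub (s * x + t * y) x) hs
    have h2 := mul_le_mul_of_nonneg_left (sub (s * x + t * y) y) ht
    obtain rfl : t = 1 - s := by linarith
    linarith
  · intro r hr
    rw [hL, c1 r hr]; ring
  · intro r hr
    rw [hL, c2 r hr, ha]
  · intro r hr
    rw [hL, c3 r hr, hb]; ring
  · rw [hderiv]; exact hDc
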